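/- arXiv:1802.02031 — 4 statements merged into one kernel-verified Lean document; each statement's English description precedes it below -/
import Mathlib

section
/- Let f : ℝ → ℝ be a nonnegative nondecreasing function, let s₀ ∈ ℝ and ε ∈ (0,1), and suppose that f(s − f(s)) ≤ ε·f(s) for all s ≤ s₀. Then f(s) = 0 for all s ≤ s₀ − f(s₀)/(1 − ε). -/
/-- Stampacchia-type iteration lemma: if `f` is nonnegative and nondecreasing,
`ε ∈ (0,1)`, and `f (s - f s) ≤ ε * f s` for all `s ≤ s₀`, then `f s = 0` for
all `s ≤ s₀ - f s₀ / (1 - ε)`. -/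
theorem stampacchia_lemma (f : ℝ → ℝ) (hf_nonneg : ∀ s, 0 ≤ f s)
    (hf_mono : Monotone f) (s₀ ε : ℝ) (hε : ε ∈ Set.Ioo (0 : ℝ) 1)
    (h : ∀ s ≤ s₀, f (s - f s) ≤ ε * f s) :
    ∀ s ≤ s₀ - f s₀ / (1 - ε), f s = 0 := by
  obtain ⟨h0, h1⟩ := hε
  intro s hs
  obtain ⟨c, hc⟩ : ∃ c, c = f s₀ / (1 - ε) := ⟨_, rfl⟩
  have h1' : 0 < 1 - ε := by linarith
  have hc0 : 0 ≤ c := hc ▸ div_nonneg (hf_nonneg _) h1'.le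
  have hfc : f s₀ = c * (1 - ε) := by rw [hc]; field_simp
  rw [← hc] at hs
  have key : ∀ n : ℕ, ∃ t ≤ s₀, f t ≤ ε ^ n * f s₀ ∧ s₀ - c * (1 - ε ^ n) ≤ t := by
    intro n
    induction n with
    | zero => exact ⟨s₀, le_rfl, by simp, by simp⟩
    | succ n ih =>
      obtain ⟨t, ht, hft, hl⟩ := ih
      refine ⟨t - f t, by linarith [hf_nonneg t], ?_, ?_⟩
      · calc f (t - f t) ≤ ε * f t := h t ht
          _ ≤ ε * (ε ^ n * f s₀) := by gcongr
          _ = ε ^ (n + 1) * f s₀ := by ring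
      · rw [hfc] at hft
        have e : ε ^ (n + 1) = ε ^ n * ε := pow_succ _ _
        rw [e]
        linarith
  have hle : ∀ n : ℕ, f s ≤ ε ^ n * f s₀ := by
    intro n
    obtain ⟨t, _, hft, hl⟩ := key n
    have hp : 0 ≤ c * ε ^ n := by positivity
    exact (hf_mono (by linarith)).trans hft
  have hlim : Filter.Tendsto (fun n : ℕ => ε ^ n * f s₀) Filter.atTop (nhds 0) := by
    simpa using (tendsto_pow_atTop_nhds_zero_of_lt_one h0.le h1).mul_const (f s₀)
  exact le_antisymm (ge_of_tendsto' hlim hle) (hf_nonneg s)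
end

section
/- Let b ∈ (0,2) and set θ = (2+b)/(2+3b) ∈ (0,1). Then there exist constants c₁ > 0 and c₂ > 0, depending only on b, such that for every nondegenerate interval [x₁,x₂] ⊂ ℝ of length L = x₂ − x₁ > 0 and every function v : ℝ → ℝ that is twice continuously differentiable on [x₁,x₂], one has (∫_{x₁}^{x₂} v′(x)² dx)^(1/2) ≤ c₁·(∫_{x₁}^{x₂} v″(x)² dx)^(θ/2)·(∫_{x₁}^{x₂} |v(x)|^b dx)^((1−θ)/b) + c₂·L^(−(2−b)/(2b)−1)·(∫_{x₁}^{x₂} |v(x)|^b dx)^(1/b). -/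
open Real

structure GNHyp (v f g : ℝ → ℝ) (a c : ℝ) : Prop where
  cv : ContinuousOn v (Set.Icc a c)
  cf : ContinuousOn f (Set.Icc a c)
  cg : ContinuousOn g (Set.Icc a c)
  dv : ∀ x ∈ Set.Ioo a c, HasDerivAt v (f x) x
  df : ∀ x ∈ Set.Ioo a c, HasDerivAt f (g x) x

lemma GNHyp.mono {v f g : ℝ → ℝ} {a c a' c' : ℝ} (h : GNHyp v f g a c) (ha : a ≤ a')
    (hc : c' ≤ c) : GNHyp v f g a' c' :=
  ⟨h.cv.mono (Set.Icc_subset_Icc ha hc), h.cf.mono (Set.Icc_subset_Icc ha hc),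
   h.cg.mono (Set.Icc_subset_Icc ha hc), fun x hx => h.dv x (Set.Ioo_subset_Ioo ha hc hx),
   fun x hx => h.df x (Set.Ioo_subset_Ioo ha hc hx)⟩

lemma gn_ii {h : ℝ → ℝ} {a c u w : ℝ} (hh : ContinuousOn h (Set.Icc a c)) (hu : a ≤ u)
    (huw : u ≤ w) (hw : w ≤ c) : IntervalIntegrable h MeasureTheory.volume u w := by
  apply ContinuousOn.intervalIntegrable
  rw [Set.uIcc_of_le huw]
  exact hh.mono (Set.Icc_subset_Icc hu hw)

lemma gn_int_mono {h : ℝ → ℝ} {a c u w : ℝ} (hh : ContinuousOn h (Set.Icc a c))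
    (h0 : ∀ x, 0 ≤ h x) (hu : a ≤ u) (huw : u ≤ w) (hw : w ≤ c) :
    ∫ x in u..w, h x ≤ ∫ x in a..c, h x := by
  apply intervalIntegral.integral_mono_interval hu huw hw
  · exact Filter.Eventually.of_forall h0
  · exact gn_ii hh le_rfl (hu.trans (huw.trans hw)) le_rfl

lemma gn_exists_small {h : ℝ → ℝ} {u w : ℝ} (hh : ContinuousOn h (Set.Icc u w))
    (huw : u < w) : ∃ p ∈ Set.Icc u w, h p * (w - u) ≤ ∫ x in u..w, h x := by
  obtain ⟨p, hp, hmin⟩ := isCompact_Icc.exists_isMinOn (Set.nonempty_Icc.2 huw.le) hh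
  refine ⟨p, hp, ?_⟩
  have := intervalIntegral.integral_mono_on huw.le
    (intervalIntegrable_const (c := h p)) (gn_ii hh le_rfl huw.le le_rfl)
    (fun x hx => hmin hx)
  simpa [mul_comm] using this

lemma gn_cs {f g : ℝ → ℝ} {u w : ℝ} (huw : u ≤ w) (cf : ContinuousOn f (Set.Icc u w))
    (cg : ContinuousOn g (Set.Icc u w)) (df : ∀ x ∈ Set.Ioo u w, HasDerivAt f (g x) x) :
    (f w - f u) ^ 2 ≤ (w - u) * ∫ x in u..w, g x ^ 2 := by
  rcases huw.eq_or_lt with rfl | hlt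
  · simp
  have hg := gn_ii cg le_rfl huw le_rfl
  have hg2 : IntervalIntegrable (fun x => g x ^ 2) MeasureTheory.volume u w :=
    gn_ii (cg.pow 2) le_rfl huw le_rfl
  have e := intervalIntegral.integral_eq_sub_of_hasDerivAt_of_le huw cf df hg
  set m := (f w - f u) / (w - u) with hm
  have hp : 0 < w - u := sub_pos.2 hlt
  have h0 : 0 ≤ ∫ x in u..w, (g x ^ 2 - 2 * m * g x + m ^ 2) := by
    apply intervalIntegral.integral_nonneg huw
    intro x _
    nlinarith [sq_nonneg (g x - m)]
  rw [intervalIntegral.integral_add (hg2.sub (hg.const_mul _)) intervalIntegrable_const,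
    intervalIntegral.integral_sub hg2 (hg.const_mul _), intervalIntegral.integral_const_mul, e,
    intervalIntegral.integral_const] at h0
  have hmm : f w - f u = m * (w - u) := by rw [hm]; field_simp
  rw [hmm] at h0 ⊢
  simp only [smul_eq_mul] at h0
  nlinarith [mul_nonneg hp.le h0]

lemma gn_local {b : ℝ} (hb : 0 < b) {v f g : ℝ → ℝ} {a c : ℝ} (hac : a < c)
    (H : GNHyp v f g a c) :
    ∫ x in a..c, f x ^ 2 ≤ 2 * (c - a) ^ 2 * (∫ x in a..c, g x ^ 2) +
      72 / (c - a) * (3 * (∫ x in a..c, |v x| ^ b) / (c - a)) ^ (2 / b) := by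
  obtain ⟨l, hl⟩ : ∃ l, l = c - a := ⟨_, rfl⟩
  have hl0 : 0 < l := by linarith
  have cvb : ContinuousOn (fun x => |v x| ^ b) (Set.Icc a c) :=
    H.cv.abs.rpow_const (fun x _ => Or.inr hb.le)
  have nvb : ∀ x, 0 ≤ |v x| ^ b := fun x => rpow_nonneg (abs_nonneg _) _
  set B := ∫ x in a..c, |v x| ^ b with hB
  set A := ∫ x in a..c, g x ^ 2 with hA
  have hB0 : 0 ≤ B := intervalIntegral.integral_nonneg hac.le (fun x _ => nvb x)
  have hA0 : 0 ≤ A := intervalIntegral.integral_nonneg hac.le (fun x _ => sq_nonneg _)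
  set M := (3 * B / l) ^ (1 / b) with hM
  have hM0 : 0 ≤ M := rpow_nonneg (by positivity) _
  have key : ∀ u w, a ≤ u → w ≤ c → w - u = l / 3 → ∃ p ∈ Set.Icc u w, |v p| ≤ M := by
    intro u w hu hw huw
    obtain ⟨p, hp, hle⟩ := gn_exists_small (cvb.mono (Set.Icc_subset_Icc hu hw))
      (show u < w by linarith)
    refine ⟨p, hp, ?_⟩
    have h1 := hle.trans (gn_int_mono cvb nvb hu (by linarith) hw)
    rw [← hB, huw] at h1
    have h2 : |v p| ^ b ≤ 3 * B / l := by
      rw [le_div_iff₀ hl0]; linarith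
    have h3 := rpow_le_rpow (nvb p) h2 (show 0 ≤ 1 / b by positivity)
    rwa [← rpow_mul (abs_nonneg _), mul_one_div_cancel hb.ne', rpow_one] at h3
  obtain ⟨p, hp, hvp⟩ := key a (a + l / 3) le_rfl (by linarith) (by ring)
  obtain ⟨q, hq, hvq⟩ := key (c - l / 3) c (by linarith) le_rfl (by ring)
  have hpq : l / 3 ≤ q - p := by linarith [hp.2, hq.1]
  obtain ⟨ξ, hξ, hs⟩ := exists_hasDerivAt_eq_slope v f (show p < q by linarith)
    (H.cv.mono (Set.Icc_subset_Icc hp.1 hq.2))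
    (fun x hx => H.dv x (Set.Ioo_subset_Ioo hp.1 hq.2 hx))
  have hξ2 : f ξ ^ 2 ≤ 36 * M ^ 2 / l ^ 2 := by
    have h1 : |f ξ| ≤ 6 * M / l := by
      rw [hs, abs_div, abs_of_pos (show 0 < q - p by linarith), div_le_div_iff₀ (by linarith) hl0]
      have : |v q - v p| ≤ 2 * M := by linarith [abs_sub (v q) (v p)]
      calc |v q - v p| * l ≤ 2 * M * l := by gcongr
        _ ≤ 6 * M * (q - p) := by nlinarith
    calc f ξ ^ 2 = |f ξ| ^ 2 := (sq_abs _).symm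
      _ ≤ (6 * M / l) ^ 2 := by gcongr
      _ = _ := by ring
  have haξ : a ≤ ξ := hp.1.trans hξ.1.le
  have hξc : ξ ≤ c := hξ.2.le.trans hq.2
  have hx : ∀ x ∈ Set.Icc a c, (f x - f ξ) ^ 2 ≤ l * A := by
    have aux : ∀ u w, a ≤ u → u ≤ w → w ≤ c → (f w - f u) ^ 2 ≤ l * A := by
      intro u w hu huw hw
      have H' := H.mono hu hw
      refine (gn_cs huw H'.cf H'.cg H'.df).trans ?_
      have := gn_int_mono (h := fun x => g x ^ 2) (H.cg.pow 2) (fun x => sq_nonneg _) hu huw hw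
      exact mul_le_mul (by linarith) this
        (intervalIntegral.integral_nonneg huw (fun x _ => sq_nonneg _)) hl0.le
    intro x hx
    rcases le_total ξ x with h | h
    · exact aux ξ x haξ h hx.2
    · have := aux x ξ hx.1 h hξc
      nlinarith
  have hD := intervalIntegral.integral_mono_on hac.le
    (gn_ii (H.cf.pow 2) le_rfl hac.le le_rfl)
    (intervalIntegrable_const (c := 2 * (36 * M ^ 2 / l ^ 2) + 2 * (l * A)))
    (fun x hx' => by
      have := hx x hx'
      show f x ^ 2 ≤ _
      nlinarith [sq_nonneg (f x - 2 * f ξ)])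
  rw [intervalIntegral.integral_const, smul_eq_mul, ← hl] at hD
  rw [← hl]
  have hMM : (3 * B / l) ^ (2 / b) = M ^ 2 := by
    rw [hM, ← rpow_natCast, ← rpow_mul (by positivity)]
    congr 1
    push_cast; ring
  rw [hMM]
  refine hD.trans (le_of_eq ?_)
  field_simp
  ring

lemma gn_multi {b : ℝ} (hb : 0 < b) (hb2 : b < 2) {v f g : ℝ → ℝ} {a l : ℝ} (hl : 0 < l)
    (n : ℕ) : ∀ c, c = a + (n + 1) * l → GNHyp v f g a c → 
    ∫ x in a..c, f x ^ 2 ≤ 2 * l ^ 2 * (∫ x in a..c, g x ^ 2) +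
      72 / l * (3 * (∫ x in a..c, |v x| ^ b) / l) ^ (2 / b) := by
  induction n with
  | zero =>
    intro c hc H
    have : l = c - a := by rw [hc]; push_cast; ring
    rw [this]
    exact gn_local hb (by linarith) H
  | succ n ih =>
    intro c hc H
    set d := a + (n + 1) * l with hd
    have hdc : c = d + l := by rw [hc, hd]; push_cast; ring
    have had : a ≤ d := by rw [hd]; linarith [show 0 ≤ (n + 1) * l by positivity]
    have hdc' : d ≤ c := by linarith
    have h1 := ih d rfl (H.mono le_rfl hdc')
    have h2 := gn_local hb (by linarith) (H.mono had le_rfl)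
    rw [show c - d = l by linarith] at h2
    have cvb : ContinuousOn (fun x => |v x| ^ b) (Set.Icc a c) :=
      H.cv.abs.rpow_const (fun x _ => Or.inr hb.le)
    have nvb : ∀ x, 0 ≤ |v x| ^ b := fun x => rpow_nonneg (abs_nonneg _) _
    have ef := intervalIntegral.integral_add_adjacent_intervals
      (gn_ii (H.cf.pow 2) le_rfl had hdc') (gn_ii (H.cf.pow 2) had hdc' le_rfl)
    have eg := intervalIntegral.integral_add_adjacent_intervals
      (gn_ii (H.cg.pow 2) le_rfl had hdc') (gn_ii (H.cg.pow 2) had hdc' le_rfl)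
    have ev := intervalIntegral.integral_add_adjacent_intervals
      (gn_ii cvb le_rfl had hdc') (gn_ii cvb had hdc' le_rfl)
    simp only [Pi.pow_apply] at ef eg
    rw [← ef, ← eg, ← ev]
    have hB1 : 0 ≤ ∫ x in a..d, |v x| ^ b :=
      intervalIntegral.integral_nonneg had (fun x _ => nvb x)
    have hB2 : 0 ≤ ∫ x in d..c, |v x| ^ b :=
      intervalIntegral.integral_nonneg hdc' (fun x _ => nvb x)
    have hp : 1 ≤ 2 / b := by rw [le_div_iff₀ hb]; linarith
    have h3 := Real.add_rpow_le_rpow_add (a := 3 * (∫ x in a..d, |v x| ^ b) / l)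
      (b := 3 * (∫ x in d..c, |v x| ^ b) / l) (by positivity) (by positivity) hp
    rw [← add_div, ← mul_add] at h3
    have h4 := mul_le_mul_of_nonneg_left h3 (show 0 ≤ 72 / l by positivity)
    linarith

lemma gn_num {b : ℝ} (hb : 0 < b) {L A B D : ℝ} (hL : 0 < L) (hA : 0 ≤ A)
    (hB : 0 ≤ B) (hD : 0 ≤ D)
    (h : ∀ n : ℕ, D ≤ 2 * (L / (n + 1)) ^ 2 * A +
      72 / (L / (n + 1)) * (3 * B / (L / (n + 1))) ^ (2 / b)) :
    D ^ ((1 : ℝ) / 2) ≤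
      (2 + 144 * 6 ^ (2 / b)) ^ ((1 : ℝ) / 2) * A ^ ((2 + b) / (2 + 3 * b) / 2) *
        B ^ ((1 - (2 + b) / (2 + 3 * b)) / b) +
      (2 + 72 * 3 ^ (2 / b)) ^ ((1 : ℝ) / 2) * L ^ (-((2 - b) / (2 * b)) - 1) * B ^ (1 / b) := by
  set p := 2 / b with hp
  have hp0 : 0 < p := by positivity
  have T1 : 0 ≤ (2 + 144 * 6 ^ p) ^ ((1 : ℝ) / 2) * A ^ ((2 + b) / (2 + 3 * b) / 2) *
        B ^ ((1 - (2 + b) / (2 + 3 * b)) / b) := by positivity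
  have T2 : 0 ≤ (2 + 72 * 3 ^ p) ^ ((1 : ℝ) / 2) * L ^ (-((2 - b) / (2 * b)) - 1) *
      B ^ (1 / b) := by positivity
  by_cases hc : L ^ 2 * A ≤ L⁻¹ * (B / L) ^ p
  · refine le_trans ?_ (le_add_of_nonneg_left T1)
    have h0 := h 0
    simp only [Nat.cast_zero, zero_add, div_one] at h0
    rw [mul_div_assoc, mul_rpow (by norm_num) (by positivity)] at h0
    have h1 : D ≤ (2 + 72 * 3 ^ p) * (L⁻¹ * (B / L) ^ p) := by
      rw [div_eq_mul_inv] at h0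
      linarith
    refine (rpow_le_rpow hD h1 (by norm_num)).trans (le_of_eq ?_)
    rw [mul_rpow (by positivity) (by positivity), mul_assoc]
    congr 1
    rw [div_rpow hB hL.le, mul_rpow (by positivity) (by positivity),
      div_rpow (by positivity) (by positivity), ← rpow_mul hB, ← rpow_mul hL.le, ← rpow_neg_one L,
      ← rpow_mul hL.le, div_eq_mul_inv (B ^ _), ← rpow_neg hL.le, mul_left_comm, ← rpow_add hL, mul_comm]
    congr 2
    · rw [hp]; field_simp; ring
    · rw [hp]; field_simp
  · push Not at hc
    have hA' : 0 < A := by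
      rcases hA.eq_or_lt with h' | h'
      · rw [← h', mul_zero] at hc
        exact absurd hc (not_lt.2 (by positivity))
      · exact h'
    refine le_trans ?_ (le_add_of_nonneg_right T2)
    rcases hB.eq_or_lt with hB0 | hB0
    · have : D ≤ 0 := by
        have hlim : Filter.Tendsto (fun n : ℕ => 2 * (L / ((n : ℝ) + 1)) ^ 2 * A) Filter.atTop
            (nhds (2 * 0 ^ 2 * A)) := by
          refine Filter.Tendsto.mul_const _ (Filter.Tendsto.const_mul _ (Filter.Tendsto.pow ?_ 2))
          have := (tendsto_one_div_add_atTop_nhds_zero_nat (𝕜 := ℝ)).const_mul L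
          simpa [div_eq_mul_inv] using this
        have := ge_of_tendsto' hlim (fun n => by
          have := h n
          rwa [← hB0, mul_zero, zero_div, zero_rpow hp0.ne', mul_zero, add_zero] at this)
        simpa using this
      have hD0 : D = 0 := le_antisymm this hD
      rw [hD0, zero_rpow (by norm_num)]
      exact T1
    · set s := (B ^ p / A) ^ (1 / (3 + p)) with hs
      have hs0 : 0 < s := by positivity
      have hsp : s ^ (3 + p) = B ^ p / A := by
        rw [hs, ← rpow_mul (by positivity), one_div_mul_cancel (by positivity), rpow_one]
      have hsp' : s ^ 3 * s ^ p * A = B ^ p := by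
        rw [rpow_add hs0] at hsp
        have e3 : s ^ (3 : ℝ) = s ^ 3 := by exact_mod_cast rpow_natCast s 3
        rw [e3] at hsp
        rw [hsp]; field_simp
      have hsL : s < L := by
        by_contra hcon
        push Not at hcon
        rw [div_rpow hB hL.le, ← hsp'] at hc
        have : L ^ 3 * L ^ p ≤ s ^ 3 * s ^ p := by gcongr
        have h5 : L⁻¹ * (s ^ 3 * s ^ p * A / L ^ p) = (s ^ 3 * s ^ p) * (A / (L * L ^ p)) := by
          field_simp
        have h6 : L ^ 2 * A = (L ^ 3 * L ^ p) * (A / (L * L ^ p)) := by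
          field_simp
        rw [h5, h6] at hc
        exact absurd hc (not_lt.2 (by gcongr))
      set n := ⌊L / s⌋₊ with hn
      have hn1 : L / s < n + 1 := Nat.lt_floor_add_one _
      have hn2 : (n : ℝ) ≤ L / s := Nat.floor_le (by positivity)
      have hLs : 1 < L / s := by rwa [lt_div_iff₀ hs0, one_mul]
      have h0 := h n
      set l := L / ((n : ℝ) + 1) with hl
      have hn0 : 0 < (n : ℝ) + 1 := by positivity
      have hls : l ≤ s := by
        rw [hl, div_le_iff₀ hn0]
        rw [div_lt_iff₀ hs0] at hn1
        linarith
      have hsl : s / 2 ≤ l := by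
        rw [hl, le_div_iff₀ hn0]
        rw [le_div_iff₀ hs0] at hn2
        nlinarith
      have hl0 : 0 < l := by positivity
      have h1 : D ≤ (2 + 144 * 6 ^ p) * (s ^ 2 * A) := by
        calc D ≤ _ := h0
          _ ≤ 2 * s ^ 2 * A + 72 / (s / 2) * (3 * B / (s / 2)) ^ p := by gcongr
          _ = _ := by
            rw [show 3 * B / (s / 2) = 6 * (B / s) by field_simp; ring,
              mul_rpow (by norm_num) (by positivity), div_rpow hB hs0.le, ← hsp']
            field_simp
            ring
      refine (rpow_le_rpow hD h1 (by norm_num)).trans (le_of_eq ?_)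
      rw [mul_rpow (by positivity) (by positivity), mul_assoc]
      congr 1
      rw [mul_rpow (by positivity) hA, ← sqrt_eq_rpow, sqrt_sq hs0.le, hs,
        div_rpow (by positivity) hA, ← rpow_mul hB, div_eq_mul_inv, ← rpow_neg hA, mul_assoc,
        ← sqrt_eq_rpow, sqrt_eq_rpow A, ← rpow_add hA', mul_comm]
      have e : 3 + p ≠ 0 := by positivity
      have e' : 3 * b + 2 ≠ 0 := by positivity
      have e2 : 1 / (3 + p) = b / (2 + 3 * b) := by
        rw [hp]; field_simp; ring
      rw [e2, hp]
      congr 2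
      · field_simp; ring
      · field_simp; ring

/-- One-dimensional Gagliardo–Nirenberg interpolation inequality for the first
derivative on a bounded interval (`N = 1`, `a = d = j = 2`, `k = 1`), with
`θ = (2+b)/(2+3b)` and explicit dependence of the lower-order constant on the
interval length `L = x₂ - x₁`. -/
theorem gagliardo_nirenberg_interval_deriv (b : ℝ) (hb : b ∈ Set.Ioo (0 : ℝ) 2) :
    let θ : ℝ := (2 + b) / (2 + 3 * b)
    ∃ c₁ : ℝ, 0 < c₁ ∧ ∃ c₂ : ℝ, 0 < c₂ ∧
      ∀ x₁ x₂ : ℝ, x₁ < x₂ → ∀ v : ℝ → ℝ,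
        ContDiffOn ℝ 2 v (Set.Icc x₁ x₂) →
        (∫ x in x₁..x₂,
            (iteratedDerivWithin 1 v (Set.Icc x₁ x₂) x) ^ 2) ^ ((1 : ℝ) / 2) ≤
          c₁ * (∫ x in x₁..x₂,
              (iteratedDerivWithin 2 v (Set.Icc x₁ x₂) x) ^ 2) ^ (θ / 2) *
            (∫ x in x₁..x₂, |v x| ^ b) ^ ((1 - θ) / b) +
          c₂ * (x₂ - x₁) ^ (-((2 - b) / (2 * b)) - 1) *
            (∫ x in x₁..x₂, |v x| ^ b) ^ (1 / b) := by
  intro θ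
  obtain ⟨hb0, hb2⟩ := hb
  refine ⟨(2 + 144 * 6 ^ (2 / b)) ^ ((1 : ℝ) / 2), by positivity,
    (2 + 72 * 3 ^ (2 / b)) ^ ((1 : ℝ) / 2), by positivity, ?_⟩
  intro x₁ x₂ hx v hv
  have hu : UniqueDiffOn ℝ (Set.Icc x₁ x₂) := uniqueDiffOn_Icc hx
  have d0 : DifferentiableOn ℝ (iteratedDerivWithin 0 v (Set.Icc x₁ x₂)) (Set.Icc x₁ x₂) :=
    hv.differentiableOn_iteratedDerivWithin (by norm_num) hu
  have d1 : DifferentiableOn ℝ (iteratedDerivWithin 1 v (Set.Icc x₁ x₂)) (Set.Icc x₁ x₂) :=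
    hv.differentiableOn_iteratedDerivWithin (by norm_num) hu
  have H : GNHyp v (iteratedDerivWithin 1 v (Set.Icc x₁ x₂))
      (iteratedDerivWithin 2 v (Set.Icc x₁ x₂)) x₁ x₂ := by
    refine ⟨hv.continuousOn, hv.continuousOn_iteratedDerivWithin (by norm_num) hu,
      hv.continuousOn_iteratedDerivWithin (by norm_num) hu, ?_, ?_⟩
    · intro x hx'
      have hm := Set.Ioo_subset_Icc_self hx'
      have := (hv.differentiableOn (by norm_num) x hm).hasDerivWithinAt
      rw [iteratedDerivWithin_one]
      exact this.hasDerivAt (Icc_mem_nhds hx'.1 hx'.2)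
    · intro x hx'
      have hm := Set.Ioo_subset_Icc_self hx'
      have := (d1 x hm).hasDerivWithinAt
      rw [show iteratedDerivWithin 2 v (Set.Icc x₁ x₂) x = _ from
        congrFun (iteratedDerivWithin_succ (n := 1)) x]
      exact this.hasDerivAt (Icc_mem_nhds hx'.1 hx'.2)
  have hL : 0 < x₂ - x₁ := sub_pos.2 hx
  refine gn_num hb0 hL ?_ ?_ ?_ ?_
  · exact intervalIntegral.integral_nonneg hx.le (fun x _ => sq_nonneg _)
  · exact intervalIntegral.integral_nonneg hx.le (fun x _ => rpow_nonneg (abs_nonneg _) _)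
  · exact intervalIntegral.integral_nonneg hx.le (fun x _ => sq_nonneg _)
  · intro n
    exact gn_multi hb0 hb2 (by positivity) n x₂ (by field_simp; ring) H
end

section
/- Let C > 0, κ₁ > 0, κ₂ > 0, set κ = (1+κ₁)(1+κ₂) and γ = max{ 2^(−κ₁/(4κ)), 2^(−κ₂/(2κ)) }. Then γ < 1, and for any D̃ : ℝ → [0,∞) and any s ∈ ℝ, if D̃(s − δ(s)) ≤ D̃(s)/2, where δ(t) = max{ (4C·D̃(t)^(κ₁))^(1/(4κ)), (4C·D̃(t)^(κ₂))^(1/(2κ)) }, then δ(s − δ(s)) ≤ γ·δ(s). -/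
open Real

theorem stampacchia_aux (C a m x y : ℝ) (hC : 0 < C) (ha : 0 < a) (hm : 0 < m)
    (hx : 0 ≤ x) (hy : 0 ≤ y) (h : x ≤ y / 2) :
    (4 * C * x ^ a) ^ (1 / m) ≤ (2 : ℝ) ^ (-(a / m)) * (4 * C * y ^ a) ^ (1 / m) := by
  have e : (2 : ℝ) ^ (-(a / m)) = ((2 : ℝ) ^ (-a)) ^ (1 / m) := by
    rw [← Real.rpow_mul (by norm_num)]
    congr 1
    ring
  rw [e, ← Real.mul_rpow (by positivity) (by positivity)]
  apply Real.rpow_le_rpow (by positivity) _ (by positivity)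
  have h1 : x ^ a ≤ (y / 2) ^ a := Real.rpow_le_rpow hx h ha.le
  have h2 : (y / 2) ^ a = (2 : ℝ) ^ (-a) * y ^ a := by
    rw [Real.div_rpow hy (by norm_num), Real.rpow_neg (by norm_num)]
    ring
  calc 4 * C * x ^ a ≤ 4 * C * ((2 : ℝ) ^ (-a) * y ^ a) := by
        rw [← h2]; gcongr
    _ = _ := by ring

/-- Contraction step of the Stampacchia-type iteration: with
`κ = (1+κ₁)(1+κ₂)` and `γ = max (2^(-κ₁/(4κ))) (2^(-κ₂/(2κ)))` one has `γ < 1`,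
and whenever the localized energy is halved, `D̃(s - δ(s)) ≤ D̃(s)/2`, the step
size `δ(t) = max ((4C D̃(t)^κ₁)^(1/(4κ))) ((4C D̃(t)^κ₂)^(1/(2κ)))` contracts:
`δ(s - δ(s)) ≤ γ δ(s)`. -/
theorem stampacchia_contraction_step (C κ₁ κ₂ : ℝ) (hC : 0 < C)
    (hκ₁ : 0 < κ₁) (hκ₂ : 0 < κ₂) (κ γ : ℝ) (hκ : κ = (1 + κ₁) * (1 + κ₂))
    (hγ : γ = max ((2 : ℝ) ^ (-(κ₁ / (4 * κ)))) ((2 : ℝ) ^ (-(κ₂ / (2 * κ))))) :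
    γ < 1 ∧
    ∀ D : ℝ → ℝ, (∀ t, 0 ≤ D t) →
      ∀ s : ℝ,
        (let δ : ℝ → ℝ := fun t =>
          max ((4 * C * (D t) ^ κ₁) ^ (1 / (4 * κ)))
            ((4 * C * (D t) ^ κ₂) ^ (1 / (2 * κ)))
        D (s - δ s) ≤ D s / 2 → δ (s - δ s) ≤ γ * δ s) := by
  have hκpos : 0 < κ := by rw [hκ]; positivity
  refine ⟨?_, ?_⟩
  · rw [hγ]
    apply max_lt
    · exact Real.rpow_lt_one_of_one_lt_of_neg one_lt_two (neg_neg_of_pos (by positivity))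
    · exact Real.rpow_lt_one_of_one_lt_of_neg one_lt_two (neg_neg_of_pos (by positivity))
  · intro D hD s δ h
    have hg1 : (2 : ℝ) ^ (-(κ₁ / (4 * κ))) ≤ γ := hγ ▸ le_max_left _ _
    have hg2 : (2 : ℝ) ^ (-(κ₂ / (2 * κ))) ≤ γ := hγ ▸ le_max_right _ _
    have hg0 : 0 ≤ γ := le_trans (by positivity) hg1
    have hDs := hD s
    apply max_le
    · refine (stampacchia_aux C κ₁ (4 * κ) _ _ hC hκ₁ (by positivity) (hD _) hDs h).trans ?_
      exact mul_le_mul hg1 (le_max_left _ _) (by positivity) hg0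
    · refine (stampacchia_aux C κ₂ (2 * κ) _ _ hC hκ₂ (by positivity) (hD _) hDs h).trans ?_
      exact mul_le_mul hg2 (le_max_right _ _) (by positivity) hg0
end

section
/- Let C > 0, r₀ > 0, κ₁ > 0, κ₂ > 0, set κ = (1+κ₁)(1+κ₂) and γ = max{ 2^(−κ₁/(4κ)), 2^(−κ₂/(2κ)) }. Suppose D̃ : ℝ → [0,∞) is nondecreasing on (−∞, r₀] and satisfies D̃(s − δ) ≤ C·(δ^(−4κ)·D̃(s)^(1+κ₁) + δ^(−2κ)·D̃(s)^(1+κ₂)) for all s ≤ r₀ and all δ ∈ (0, r₀]. Define δ(t) = max{ (4C·D̃(t)^(κ₁))^(1/(4κ)), (4C·D̃(t)^(κ₂))^(1/(2κ)) } and assume δ(r₀) ≤ r₀. Then D̃(s) = 0 for all s ≤ r₀ − δ(r₀)/(1−γ). -/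
open Real

theorem aux_half (C p k x δ : ℝ) (hC : 0 < C) (hp : 0 < p) (hx : 0 < x) (hδ : 0 < δ)
    (h : (4 * C * x ^ k) ^ (1 / p) ≤ δ) : C * (δ ^ (-p) * x ^ (1 + k)) ≤ x / 4 := by
  have hxk : 0 < x ^ k := rpow_pos_of_pos hx k
  have h1 : 4 * C * x ^ k ≤ δ ^ p := by
    have h2 := rpow_le_rpow (by positivity) h hp.le
    rwa [← rpow_mul (by positivity), one_div_mul_cancel hp.ne', rpow_one] at h2
  have hdp : 0 < δ ^ p := rpow_pos_of_pos hδ p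
  rw [rpow_neg hδ.le, rpow_add hx, rpow_one]
  have : C * ((δ ^ p)⁻¹ * (x * x ^ k)) = (x / 4) * ((4 * C * x ^ k) / δ ^ p) := by
    field_simp
  rw [this]
  have h3 : (4 * C * x ^ k) / δ ^ p ≤ 1 := (div_le_one hdp).2 h1
  nlinarith

theorem aux_contr (C p k x y : ℝ) (hC : 0 < C) (hp : 0 < p) (hk : 0 < k) (hx : 0 ≤ x)
    (hy : 0 ≤ y) (h : y ≤ x / 2) :
    (4 * C * y ^ k) ^ (1 / p) ≤ (2 : ℝ) ^ (-(k / p)) * (4 * C * x ^ k) ^ (1 / p) := by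
  have e : (2 : ℝ) ^ (-(k / p)) = ((2 : ℝ) ^ (-k)) ^ (1 / p) := by
    rw [← rpow_mul (by norm_num)]; congr 1; ring
  rw [e, ← mul_rpow (by positivity) (by positivity)]
  apply rpow_le_rpow (by positivity) _ (by positivity)
  have h1 : y ^ k ≤ (x / 2) ^ k := rpow_le_rpow hy h hk.le
  rw [div_rpow hx (by norm_num)] at h1
  rw [rpow_neg (by norm_num)]
  calc 4 * C * y ^ k ≤ 4 * C * (x ^ k / 2 ^ k) := by gcongr
    _ = _ := by ring

/-- Finite speed of propagation via Stampacchia iteration: with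
`κ = (1+κ₁)(1+κ₂)` and `γ = max (2^(-κ₁/(4κ))) (2^(-κ₂/(2κ)))`, if the localized
energy `D̃` is nonnegative, nondecreasing on `(-∞, r₀]`, satisfies the recursive
inequality `D̃(s-δ) ≤ C (δ^(-4κ) D̃(s)^(1+κ₁) + δ^(-2κ) D̃(s)^(1+κ₂))` for all
`s ≤ r₀` and `δ ∈ (0, r₀]`, and if the step size
`δ(t) = max ((4C D̃(t)^κ₁)^(1/(4κ))) ((4C D̃(t)^κ₂)^(1/(2κ)))` satisfies
`δ(r₀) ≤ r₀`, then `D̃(s) = 0` for all `s ≤ r₀ - δ(r₀)/(1-γ)`. -/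
theorem stampacchia_finite_speed (C r₀ κ₁ κ₂ : ℝ) (hC : 0 < C) (hr₀ : 0 < r₀)
    (hκ₁ : 0 < κ₁) (hκ₂ : 0 < κ₂) (κ γ : ℝ) (hκ : κ = (1 + κ₁) * (1 + κ₂))
    (hγ : γ = max ((2 : ℝ) ^ (-(κ₁ / (4 * κ)))) ((2 : ℝ) ^ (-(κ₂ / (2 * κ)))))
    (D : ℝ → ℝ) (hD : ∀ t, 0 ≤ D t)
    (hmono : ∀ s t : ℝ, s ≤ t → t ≤ r₀ → D s ≤ D t)
    (hrec : ∀ s : ℝ, s ≤ r₀ → ∀ δ ∈ Set.Ioc (0 : ℝ) r₀,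
      D (s - δ) ≤ C * (δ ^ (-(4 * κ)) * (D s) ^ (1 + κ₁)
        + δ ^ (-(2 * κ)) * (D s) ^ (1 + κ₂)))
    (δf : ℝ → ℝ)
    (hδf : ∀ t, δf t = max ((4 * C * (D t) ^ κ₁) ^ (1 / (4 * κ)))
      ((4 * C * (D t) ^ κ₂) ^ (1 / (2 * κ))))
    (hle : δf r₀ ≤ r₀) :
    ∀ s ≤ r₀ - δf r₀ / (1 - γ), D s = 0 := by
  have hκp : 0 < κ := by rw [hκ]; positivity
  have hγ0 : 0 < γ := by rw [hγ]; exact lt_max_of_lt_left (by positivity)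
  have hγ1 : γ < 1 := by
    rw [hγ]
    apply max_lt <;> apply rpow_lt_one_of_one_lt_of_neg (by norm_num) <;>
      exact neg_neg_of_pos (by positivity)
  have hg : 0 < 1 - γ := by linarith
  have hδ0 : ∀ t, 0 ≤ δf t := by
    intro t
    have := hD t
    rw [hδf]; exact le_max_of_le_left (by positivity)
  have half : ∀ t ≤ r₀, δf t ≤ r₀ → D (t - δf t) ≤ D t / 2 := by
    intro t ht hdt
    rcases (hD t).eq_or_lt with h0 | hpos
    · have := hmono (t - δf t) t (by linarith [hδ0 t]) ht
      linarith
    · have hδpos : 0 < δf t := by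
        rw [hδf]; exact lt_max_of_lt_left (by positivity)
      have h1 := hrec t ht (δf t) ⟨hδpos, hdt⟩
      have h2 := aux_half C (4 * κ) κ₁ (D t) (δf t) hC (by positivity) hpos hδpos
        (by rw [hδf]; exact le_max_left _ _)
      have h3 := aux_half C (2 * κ) κ₂ (D t) (δf t) hC (by positivity) hpos hδpos
        (by rw [hδf]; exact le_max_right _ _)
      linarith
  have contr : ∀ t t', D t' ≤ D t / 2 → δf t' ≤ γ * δf t := by
    intro t t' h
    have a1 := aux_contr C (4 * κ) κ₁ (D t) (D t') hC (by positivity) hκ₁ (hD t) (hD t') h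
    have a2 := aux_contr C (2 * κ) κ₂ (D t) (D t') hC (by positivity) hκ₂ (hD t) (hD t') h
    have b1 : (4 * C * (D t) ^ κ₁) ^ (1 / (4 * κ)) ≤ δf t := by rw [hδf]; exact le_max_left _ _
    have b2 : (4 * C * (D t) ^ κ₂) ^ (1 / (2 * κ)) ≤ δf t := by rw [hδf]; exact le_max_right _ _
    have c1 : (2 : ℝ) ^ (-(κ₁ / (4 * κ))) ≤ γ := by rw [hγ]; exact le_max_left _ _
    have c2 : (2 : ℝ) ^ (-(κ₂ / (2 * κ))) ≤ γ := by rw [hγ]; exact le_max_right _ _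
    have n1 := hD t
    rw [hδf t']
    exact max_le (a1.trans (mul_le_mul c1 b1 (by positivity) hγ0.le))
      (a2.trans (mul_le_mul c2 b2 (by positivity) hγ0.le))
  intro s hs
  have key : ∀ n : ℕ, ∀ t ≤ r₀, δf t ≤ r₀ → s ≤ t - δf t / (1 - γ) →
      D s ≤ D t * (1 / 2) ^ n := by
    intro n
    induction n with
    | zero =>
      intro t ht _ hst
      have : 0 ≤ δf t / (1 - γ) := div_nonneg (hδ0 t) hg.le
      simpa using hmono s t (by linarith) ht
    | succ n ih =>
      intro t ht hdt hst
      have h1 := half t ht hdt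
      have h2 := contr t _ h1
      have h3 := hδ0 t
      have h4 : γ * δf t ≤ δf t := by nlinarith
      have h5 : δf (t - δf t) / (1 - γ) ≤ γ * δf t / (1 - γ) := by gcongr
      have h6 : δf t + γ * δf t / (1 - γ) = δf t / (1 - γ) := by
        field_simp; ring
      have h7 := ih (t - δf t) (by linarith) (by linarith) (by linarith)
      calc D s ≤ D (t - δf t) * (1 / 2) ^ n := h7
        _ ≤ D t / 2 * (1 / 2) ^ n := by gcongr
        _ = _ := by ring
  have lim : Filter.Tendsto (fun n : ℕ => D r₀ * (1 / 2 : ℝ) ^ n) Filter.atTop (nhds 0) := by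
    simpa using (tendsto_pow_atTop_nhds_zero_of_lt_one (r := (1 / 2 : ℝ)) (by norm_num)
      (by norm_num)).const_mul (D r₀)
  exact le_antisymm (ge_of_tendsto' lim fun n => key n r₀ le_rfl hle hs) (hD s)
end
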